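/- Let N ≥ 3 and 1 ≤ t < N/(N−2). There exists a constant C > 0, depending only on N and t, such that for every R > 0 and every function w that is C² on a neighborhood of the closed ball B_{2R} centered at the origin, (∫_{B_R} |w|^t dx)^{1/t} ≤ C R^{N(1/t − 1) + 2} ∫_{B_{2R}} |Δw| dx + C R^{N(1/t − 1)} ∫_{B_{2R}} |w| dx. -/

import Mathlib

open MeasureTheory Metric Real Set

noncomputable section

/-- The Euclidean Laplacian `Δw(x) = ∑ i, ∂²w/∂xᵢ²(x)` on `ℝ^N`. -/
def lap {N : ℕ} (w : EuclideanSpace ℝ (Fin N) → ℝ) (x : EuclideanSpace ℝ (Fin N)) : ℝ :=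
  ∑ i : Fin N,
    fderiv ℝ (fun y => fderiv ℝ w y (EuclideanSpace.single i 1)) x (EuclideanSpace.single i 1)

/-- `φ` is a smooth compactly supported test function with support inside `Ω`. -/
def IsTestFun {N : ℕ} (Ω : Set (EuclideanSpace ℝ (Fin N)))
    (φ : EuclideanSpace ℝ (Fin N) → ℝ) : Prop :=
  ContDiff ℝ (⊤ : ℕ∞) φ ∧ HasCompactSupport φ ∧ tsupport φ ⊆ Ω

/-- Stability of a classical solution of `-Δu = λ(v+1)^p, -Δv = γ(u+1)^θ` in `Ω`:
`√(λγpθ) ∫_Ω (v+1)^((p-1)/2) (u+1)^((θ-1)/2) φ² ≤ ∫_Ω |∇φ|²` for all test functions. -/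
def IsStable {N : ℕ} (Ω : Set (EuclideanSpace ℝ (Fin N))) (lam gam p θ : ℝ)
    (u v : EuclideanSpace ℝ (Fin N) → ℝ) : Prop :=
  ∀ φ : EuclideanSpace ℝ (Fin N) → ℝ, IsTestFun Ω φ →
    Real.sqrt (lam * gam * p * θ) *
        ∫ x in Ω, (v x + 1) ^ ((p - 1) / 2) * (u x + 1) ^ ((θ - 1) / 2) * φ x ^ 2
      ≤ ∫ x in Ω, ‖gradient φ x‖ ^ 2

/-- `(u,v)` is a positive classical solution of `-Δu = λ(v+1)^p, -Δv = γ(u+1)^θ` in `Ω`. -/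
def IsSolution {N : ℕ} (Ω : Set (EuclideanSpace ℝ (Fin N))) (lam gam p θ : ℝ)
    (u v : EuclideanSpace ℝ (Fin N) → ℝ) : Prop :=
  ContDiffOn ℝ 2 u Ω ∧ ContDiffOn ℝ 2 v Ω ∧
  (∀ x ∈ Ω, 0 < u x) ∧ (∀ x ∈ Ω, 0 < v x) ∧
  (∀ x ∈ Ω, -lap u x = lam * (v x + 1) ^ p) ∧
  (∀ x ∈ Ω, -lap v x = gam * (u x + 1) ^ θ)

/-- The quartic polynomial `L`. -/
def Lpoly (p θ s : ℝ) : ℝ :=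
  s ^ 4 - (16 * p * θ * (p + 1) / (θ + 1)) * s ^ 2
    + (16 * p * θ * (p + 1) * (p + θ + 2) / (θ + 1) ^ 2) * s
    - 16 * p * θ * (p + 1) ^ 2 / (θ + 1) ^ 2

/-!
Put `ψ(z) = (1 - |z|²)₊²` and `φ(z) = 4 (1 - |z|²)₊`, so that `∇ψ = -φ z`. An integration by parts
gives `d/ds ∫ φ(z) w(x - s z) dz = s ∫ ψ(z) Δw(x - s z) dz`, and integrating over `s ∈ [0, R]`
represents `(∫ φ) w(x)` through an average of `w` at scale `R` and averages of `Δw` at all scales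
`s ≤ R`. Interpolating between `L¹` and `L^∞`, averaging at scale `s` maps `L¹` to `L^t` with norm
at most a constant times `s ^ (N (1 / t - 1))`. By Minkowski's integral inequality the estimate
reduces to the convergence of `∫ s in 0..R, s ^ (1 + N (1 / t - 1))`, which is `t (N - 2) < N`.
-/

open scoped ENNReal NNReal Topology
open Module (finrank)

section MinkowskiIntegral

variable {α β : Type*} [MeasurableSpace α] [MeasurableSpace β] {μ : Measure α} {ν : Measure β}

theorem rpow_lintegral_le_rpow_lintegral_mul_lintegral {p : ℝ} (hp : 1 ≤ p) {f m : β → ℝ≥0∞}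
    (hf : Measurable f) (hm : Measurable m) (hm_top : ∀ᵐ y ∂ν, m y ≠ ∞)
    (hf_zero : ∀ᵐ y ∂ν, m y = 0 → f y = 0) :
    (∫⁻ y, f y ∂ν) ^ p ≤ (∫⁻ y, m y ∂ν) ^ (p - 1) * ∫⁻ y, f y ^ p * m y ^ (1 - p) ∂ν := by
  have hp0 : 0 < p := zero_lt_one.trans_le hp
  have hinv : 0 ≤ 1 / p := by positivity
  have hinv' : 0 ≤ 1 - 1 / p := sub_nonneg.2 ((div_le_one hp0).2 hp)
  have factor : ∀ᵐ y ∂ν, f y = (f y ^ p * m y ^ (1 - p)) ^ (1 / p) * m y ^ (1 - 1 / p) := by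
    filter_upwards [hm_top, hf_zero] with y hy_top hy_zero
    rcases eq_or_ne (m y) 0 with hy | hy
    · simp [hy_zero hy, hp0]
    · have hexp : (1 - p) * (1 / p) + (1 - 1 / p) = 0 := by field_simp; ring
      rw [ENNReal.mul_rpow_of_nonneg _ _ hinv, ← ENNReal.rpow_mul, ← ENNReal.rpow_mul,
        mul_one_div_cancel hp0.ne', ENNReal.rpow_one, mul_assoc, ← ENNReal.rpow_add _ _ hy hy_top,
        hexp, ENNReal.rpow_zero, mul_one]
  calc (∫⁻ y, f y ∂ν) ^ p
      = (∫⁻ y, (f y ^ p * m y ^ (1 - p)) ^ (1 / p) * m y ^ (1 - 1 / p) ∂ν) ^ p := by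
        rw [lintegral_congr_ae factor]
    _ ≤ ((∫⁻ y, f y ^ p * m y ^ (1 - p) ∂ν) ^ (1 / p) * (∫⁻ y, m y ∂ν) ^ (1 - 1 / p)) ^ p := by
        gcongr
        exact ENNReal.lintegral_mul_norm_pow_le (by fun_prop) hm.aemeasurable hinv hinv' (by ring)
    _ = (∫⁻ y, m y ∂ν) ^ (p - 1) * ∫⁻ y, f y ^ p * m y ^ (1 - p) ∂ν := by
        rw [ENNReal.mul_rpow_of_nonneg _ _ hp0.le, ← ENNReal.rpow_mul, ← ENNReal.rpow_mul,
          one_div_mul_cancel hp0.ne', ENNReal.rpow_one, mul_comm, sub_mul,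
          one_div_mul_cancel hp0.ne', one_mul]

lemma ae_ae_eq_zero_of_lintegral_rpow_eq_zero [SFinite μ] [SFinite ν] {p : ℝ} (hp : 0 < p)
    {F : α → β → ℝ≥0∞} (hF : Measurable (Function.uncurry F)) :
    ∀ᵐ x ∂μ, ∀ᵐ y ∂ν, ∫⁻ x', F x' y ^ p ∂μ = 0 → F x y = 0 := by
  have hFp : Measurable fun y ↦ ∫⁻ x, F x y ^ p ∂μ := (hF.pow_const p).lintegral_prod_left'
  have hset : MeasurableSet {z : α × β | ∫⁻ x, F x z.2 ^ p ∂μ = 0 → F z.1 z.2 = 0} :=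
    (measurableSet_eq_fun (hFp.comp measurable_snd) measurable_const).imp
      (measurableSet_eq_fun hF measurable_const)
  refine (Measure.ae_ae_comm hset).2 (Filter.Eventually.of_forall fun y ↦ ?_)
  by_cases hy : ∫⁻ x, F x y ^ p ∂μ = 0
  · have hFy : AEMeasurable (fun x ↦ F x y) μ := hF.of_uncurry_right.aemeasurable
    exact (ENNReal.ae_eq_zero_of_lintegral_rpow_eq_zero hp.le hFy hy).mono fun x hx _ ↦ hx
  · exact Filter.Eventually.of_forall fun x h ↦ absurd h hy

lemma rpow_mul_rpow_one_sub_le {p : ℝ} (hp : 0 < p) (a : ℝ≥0∞) : a ^ p * a ^ (1 - p) ≤ a := by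
  rcases eq_or_ne a 0 with rfl | ha
  · simp [hp]
  rcases eq_or_ne a ∞ with rfl | ha'
  · exact le_top
  · rw [← ENNReal.rpow_add _ _ ha ha', add_sub_cancel, ENNReal.rpow_one]

lemma rpow_sub_one_mul_self {p : ℝ} (hp : 1 ≤ p) (a : ℝ≥0∞) : a ^ (p - 1) * a = a ^ p := by
  nth_rw 2 [← ENNReal.rpow_one a]
  rw [← ENNReal.rpow_add_of_nonneg _ _ (sub_nonneg.2 hp) zero_le_one, sub_add_cancel]

-- Jensen's inequality with weights `m y = ‖F(·, y)‖_p`, integrated in `x`, is Minkowski's.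
theorem lintegral_Lp_lintegral_le [SFinite μ] [SFinite ν] {p : ℝ} (hp : 1 ≤ p)
    {F : α → β → ℝ≥0∞} (hF : Measurable (Function.uncurry F)) :
    (∫⁻ x, (∫⁻ y, F x y ∂ν) ^ p ∂μ) ^ (1 / p) ≤ ∫⁻ y, (∫⁻ x, F x y ^ p ∂μ) ^ (1 / p) ∂ν := by
  have hp0 : 0 < p := zero_lt_one.trans_le hp
  set m : β → ℝ≥0∞ := fun y ↦ (∫⁻ x, F x y ^ p ∂μ) ^ (1 / p) with hm_def
  have hFp : Measurable fun z : α × β ↦ F z.1 z.2 ^ p := hF.pow_const p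
  have hm : Measurable m := hFp.lintegral_prod_left'.pow_const _
  have hm_rpow (y : β) : ∫⁻ x, F x y ^ p ∂μ = m y ^ p := by
    rw [hm_def, ← ENNReal.rpow_mul, one_div_mul_cancel hp0.ne', ENNReal.rpow_one]
  rcases eq_or_ne (∫⁻ y, m y ∂ν) ∞ with hM | hM
  · exact hM ▸ le_top
  have hm_top : ∀ᵐ y ∂ν, m y ≠ ∞ := (ae_lt_top hm hM).mono fun y hy ↦ hy.ne
  have hF_zero : ∀ᵐ x ∂μ, ∀ᵐ y ∂ν, m y = 0 → F x y = 0 := by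
    simpa only [hm_rpow, ENNReal.rpow_eq_zero_iff_of_pos hp0] using
      ae_ae_eq_zero_of_lintegral_rpow_eq_zero (μ := μ) (ν := ν) hp0 hF
  rw [one_div, ENNReal.rpow_inv_le_iff hp0]
  calc ∫⁻ x, (∫⁻ y, F x y ∂ν) ^ p ∂μ
      ≤ ∫⁻ x, (∫⁻ y, m y ∂ν) ^ (p - 1) * ∫⁻ y, F x y ^ p * m y ^ (1 - p) ∂ν ∂μ :=
        lintegral_mono_ae <| hF_zero.mono fun x hx ↦
          rpow_lintegral_le_rpow_lintegral_mul_lintegral hp hF.of_uncurry_left hm hm_top hx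
    _ = (∫⁻ y, m y ∂ν) ^ (p - 1) * ∫⁻ y, ∫⁻ x, F x y ^ p * m y ^ (1 - p) ∂μ ∂ν := by
        have hmeas : Measurable fun z : α × β ↦ F z.1 z.2 ^ p * m z.2 ^ (1 - p) :=
          hFp.mul ((hm.comp measurable_snd).pow_const _)
        rw [lintegral_const_mul _ hmeas.lintegral_prod_right',
          lintegral_lintegral_swap hmeas.aemeasurable]
    _ = (∫⁻ y, m y ∂ν) ^ (p - 1) * ∫⁻ y, m y ^ p * m y ^ (1 - p) ∂ν := by
        congr! 3 with y
        rw [lintegral_mul_const _ (hF.of_uncurry_right.pow_const p), hm_rpow]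
    _ ≤ (∫⁻ y, m y ∂ν) ^ (p - 1) * ∫⁻ y, m y ∂ν := by
        gcongr with y
        exact rpow_mul_rpow_one_sub_le hp0 (m y)
    _ = (∫⁻ y, m y ∂ν) ^ p := rpow_sub_one_mul_self hp _

theorem eLpNorm_integral_le_lintegral_eLpNorm {G : Type*} [NormedAddCommGroup G] [NormedSpace ℝ G]
    [SFinite μ] [SFinite ν] {p : ℝ≥0} (hp : 1 ≤ p) {F : α → β → G}
    (hF : StronglyMeasurable (Function.uncurry F)) :
    eLpNorm (fun x ↦ ∫ y, F x y ∂ν) p μ ≤ ∫⁻ y, eLpNorm (fun x ↦ F x y) p μ ∂ν := by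
  have hp0 : p ≠ 0 := (zero_lt_one.trans_le hp).ne'
  simp only [eLpNorm_nnreal_eq_lintegral hp0]
  calc (∫⁻ x, ‖∫ y, F x y ∂ν‖ₑ ^ (p : ℝ) ∂μ) ^ (1 / (p : ℝ))
      ≤ (∫⁻ x, (∫⁻ y, ‖F x y‖ₑ ∂ν) ^ (p : ℝ) ∂μ) ^ (1 / (p : ℝ)) := by
        gcongr with x; exact enorm_integral_le_lintegral_enorm _
    _ ≤ ∫⁻ y, (∫⁻ x, ‖F x y‖ₑ ^ (p : ℝ) ∂μ) ^ (1 / (p : ℝ)) ∂ν :=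
        lintegral_Lp_lintegral_le (mod_cast hp) hF.enorm

end MinkowskiIntegral

section BallAverage

variable {E : Type*} [NormedAddCommGroup E] [NormedSpace ℝ E] [FiniteDimensional ℝ E]
  [MeasurableSpace E] [BorelSpace E] {μ : Measure E} [μ.IsAddHaarMeasure]

lemma lintegral_comp_smul (f : E → ℝ≥0∞) {s : ℝ} (hs : s ≠ 0) :
    ∫⁻ z, f (s • z) ∂μ = ENNReal.ofReal |(s ^ finrank ℝ E)⁻¹| * ∫⁻ z, f z ∂μ := by
  have hemb : MeasurableEmbedding fun z : E ↦ s • z :=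
    (Homeomorph.smulOfNeZero s hs).measurableEmbedding
  rw [← hemb.lintegral_map, Measure.map_addHaar_smul μ hs, lintegral_smul_measure, smul_eq_mul]

lemma lintegral_ball_comp_sub_smul_le (f : E → ℝ≥0∞) {s : ℝ} (hs : 0 < s) (x : E) :
    ∫⁻ z in ball 0 1, f (x - s • z) ∂μ ≤
      ENNReal.ofReal (s ^ finrank ℝ E)⁻¹ * ∫⁻ y, f y ∂μ :=
  calc ∫⁻ z in ball 0 1, f (x - s • z) ∂μ
      ≤ ∫⁻ z, f (x - s • z) ∂μ := setLIntegral_le_lintegral _ _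
    _ = ENNReal.ofReal (s ^ finrank ℝ E)⁻¹ * ∫⁻ y, f y ∂μ := by
        rw [lintegral_comp_smul (fun u ↦ f (x - u)) hs.ne', lintegral_sub_left_eq_self,
          abs_of_pos (by positivity)]

lemma lintegral_lintegral_ball_comp_sub_smul {f : E → ℝ≥0∞} (hf : Measurable f) (s : ℝ) :
    ∫⁻ x, ∫⁻ z in ball 0 1, f (x - s • z) ∂μ ∂μ = μ (ball 0 1) * ∫⁻ y, f y ∂μ := by
  have hmeas : Measurable (Function.uncurry fun x z : E ↦ f (x - s • z)) :=
    hf.comp (by fun_prop : Measurable fun p : E × E ↦ p.1 - s • p.2)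
  rw [lintegral_lintegral_swap hmeas.aemeasurable]
  simp only [lintegral_sub_right_eq_self, setLIntegral_const, mul_comm]

lemma lintegral_rpow_le_rpow_mul_lintegral {α : Type*} [MeasurableSpace α] {ν : Measure α} {p : ℝ}
    (hp : 1 ≤ p) {g : α → ℝ≥0∞} (hg : Measurable g) {A : ℝ≥0∞} (hgA : ∀ x, g x ≤ A) :
    ∫⁻ x, g x ^ p ∂ν ≤ A ^ (p - 1) * ∫⁻ x, g x ∂ν := by
  rw [← lintegral_const_mul _ hg]
  refine lintegral_mono fun x ↦ ?_
  calc g x ^ p = g x ^ (p - 1) * g x := (rpow_sub_one_mul_self hp _).symm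
    _ ≤ A ^ (p - 1) * g x := by gcongr; exact hgA x

-- The average is bounded by `s ^ (-d) ‖f‖₁` and has integral `μ (ball 0 1) ‖f‖₁`, where `d` is the
-- dimension; interpolate between `L^1` and `L^∞`.
lemma lintegral_Lp_ball_comp_sub_smul_le {f : E → ℝ≥0∞} (hf : Measurable f) {p : ℝ} (hp : 1 ≤ p)
    {s : ℝ} (hs : 0 < s) :
    (∫⁻ x, (∫⁻ z in ball 0 1, f (x - s • z) ∂μ) ^ p ∂μ) ^ (1 / p) ≤
      μ (ball 0 1) ^ (1 / p) * ENNReal.ofReal (s ^ (finrank ℝ E * (1 / p - 1))) *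
        ∫⁻ y, f y ∂μ := by
  have hp0 : 0 < p := zero_lt_one.trans_le hp
  set d := finrank ℝ E
  set I := ∫⁻ y, f y ∂μ
  have hmeas : Measurable fun x ↦ ∫⁻ z in ball 0 1, f (x - s • z) ∂μ :=
    (hf.comp (by fun_prop : Measurable fun p : E × E ↦ p.1 - s • p.2)).lintegral_prod_right'
  have hscale : (s ^ d)⁻¹ ^ (p - 1) = s ^ (d * (1 / p - 1) * p) := by
    rw [← rpow_natCast, ← rpow_neg hs.le, ← rpow_mul hs.le]
    congr 1
    field_simp
    ring
  rw [one_div, ENNReal.rpow_inv_le_iff hp0]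
  calc ∫⁻ x, (∫⁻ z in ball 0 1, f (x - s • z) ∂μ) ^ p ∂μ
      ≤ (ENNReal.ofReal (s ^ d)⁻¹ * I) ^ (p - 1) *
          ∫⁻ x, ∫⁻ z in ball 0 1, f (x - s • z) ∂μ ∂μ :=
        lintegral_rpow_le_rpow_mul_lintegral hp hmeas (lintegral_ball_comp_sub_smul_le f hs)
    _ = μ (ball 0 1) * ENNReal.ofReal ((s ^ d)⁻¹ ^ (p - 1)) * (I ^ (p - 1) * I) := by
        rw [lintegral_lintegral_ball_comp_sub_smul hf,
          ENNReal.mul_rpow_of_nonneg _ _ (sub_nonneg.2 hp),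
          ENNReal.ofReal_rpow_of_nonneg (by positivity) (sub_nonneg.2 hp)]
        ring
    _ = μ (ball 0 1) * ENNReal.ofReal (s ^ (d * (1 / p - 1))) ^ p * I ^ p := by
        congr 1
        · rw [hscale, rpow_mul hs.le, ENNReal.ofReal_rpow_of_nonneg (by positivity) hp0.le]
        · exact rpow_sub_one_mul_self hp I
    _ = (μ (ball 0 1) ^ p⁻¹ * ENNReal.ofReal (s ^ (d * (p⁻¹ - 1))) * I) ^ p := by
        rw [ENNReal.mul_rpow_of_nonneg _ _ hp0.le, ENNReal.mul_rpow_of_nonneg _ _ hp0.le,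
          ENNReal.rpow_inv_rpow hp0.ne', one_div]

end BallAverage

section ScaledAverage

variable {E : Type*} [NormedAddCommGroup E] [NormedSpace ℝ E] [MeasurableSpace E]

/-- The average `∫ z, k z * f (x - s z)` of `f` at scale `s` with profile `k`, that is, the
convolution of `f` with the rescaled kernel `s ^ (-d) k (· / s)` in dimension `d`. -/
def scaledAverage (μ : Measure E) (k f : E → ℝ) (s : ℝ) (x : E) : ℝ :=
  ∫ z, k z * f (x - s • z) ∂μ

variable [BorelSpace E] {μ : Measure E} {k f : E → ℝ}

lemma enorm_scaledAverage_le (hk_supp : ∀ z ∉ ball 0 1, k z = 0) {M : ℝ≥0∞}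
    (hkM : ∀ z, ‖k z‖ₑ ≤ M) (hf : Measurable f) {s : ℝ} (hs : 0 ≤ s) {c x : E} {r : ℝ}
    (hx : x ∈ ball c r) :
    ‖scaledAverage μ k f s x‖ₑ ≤
      M * ∫⁻ z in ball 0 1, (ball c (r + s)).indicator (‖f ·‖ₑ) (x - s • z) ∂μ := by
  have hmem {z : E} (hz : z ∈ ball 0 1) : x - s • z ∈ ball c (r + s) := by
    rw [mem_ball_zero_iff] at hz
    rw [mem_ball_iff_norm] at hx ⊢
    calc ‖x - s • z - c‖ = ‖(x - c) - s • z‖ := by rw [sub_right_comm]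
      _ ≤ ‖x - c‖ + s * ‖z‖ := by
        simpa only [norm_smul, norm_of_nonneg hs] using norm_sub_le (x - c) (s • z)
      _ < r + s := add_lt_add_of_lt_of_le hx (mul_le_of_le_one_right hs hz.le)
  calc ‖scaledAverage μ k f s x‖ₑ
      = ‖∫ z in ball 0 1, k z * f (x - s • z) ∂μ‖ₑ := by
        rw [scaledAverage, setIntegral_eq_integral_of_forall_compl_eq_zero fun z hz ↦ by
          rw [hk_supp z hz, zero_mul]]
    _ ≤ ∫⁻ z in ball 0 1, ‖k z * f (x - s • z)‖ₑ ∂μ := enorm_integral_le_lintegral_enorm _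
    _ ≤ ∫⁻ z in ball 0 1, M * (ball c (r + s)).indicator (‖f ·‖ₑ) (x - s • z) ∂μ := by
        refine setLIntegral_mono' measurableSet_ball fun z hz ↦ ?_
        rw [indicator_of_mem (hmem hz), enorm_mul]
        gcongr
        exact hkM z
    _ = M * ∫⁻ z in ball 0 1, (ball c (r + s)).indicator (‖f ·‖ₑ) (x - s • z) ∂μ :=
        lintegral_const_mul _ <| (hf.enorm.indicator measurableSet_ball).comp (by fun_prop)

variable [FiniteDimensional ℝ E] [μ.IsAddHaarMeasure]

lemma stronglyMeasurable_uncurry_scaledAverage (hk : Measurable k) (hf : Measurable f) :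
    StronglyMeasurable (Function.uncurry fun (x : E) (s : ℝ) ↦ scaledAverage μ k f s x) := by
  have hmeas : Measurable fun q : (E × ℝ) × E ↦ k q.2 * f (q.1.1 - q.1.2 • q.2) := by fun_prop
  exact hmeas.stronglyMeasurable.integral_prod_right'

lemma eLpNorm_scaledAverage_le (hk_supp : ∀ z ∉ ball 0 1, k z = 0) {M : ℝ≥0∞}
    (hkM : ∀ z, ‖k z‖ₑ ≤ M) (hf : Measurable f) {p : ℝ≥0} (hp : 1 ≤ p) {s : ℝ} (hs : 0 < s)
    (c : E) (r : ℝ) :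
    eLpNorm (scaledAverage μ k f s) p (μ.restrict (ball c r)) ≤
      M * μ (ball 0 1) ^ (1 / p : ℝ) * ENNReal.ofReal (s ^ (finrank ℝ E * (1 / p - 1) : ℝ)) *
        eLpNorm f 1 (μ.restrict (ball c (r + s))) := by
  have hp1 : (1 : ℝ) ≤ p := mod_cast hp
  have hp0 : (0 : ℝ) < p := zero_lt_one.trans_le hp1
  set g : E → ℝ≥0∞ := (ball c (r + s)).indicator (‖f ·‖ₑ)
  have hg : Measurable g := hf.enorm.indicator measurableSet_ball
  have hg_lintegral : ∫⁻ y, g y ∂μ = eLpNorm f 1 (μ.restrict (ball c (r + s))) := by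
    rw [lintegral_indicator measurableSet_ball, eLpNorm_one_eq_lintegral_enorm]
  have hmeas : Measurable fun x ↦ ∫⁻ z in ball 0 1, g (x - s • z) ∂μ :=
    (hg.comp (by fun_prop : Measurable fun q : E × E ↦ q.1 - s • q.2)).lintegral_prod_right'
  rw [eLpNorm_nnreal_eq_lintegral (zero_lt_one.trans_le hp).ne']
  calc (∫⁻ x in ball c r, ‖scaledAverage μ k f s x‖ₑ ^ (p : ℝ) ∂μ) ^ (1 / (p : ℝ))
      ≤ (∫⁻ x in ball c r, (M * ∫⁻ z in ball 0 1, g (x - s • z) ∂μ) ^ (p : ℝ) ∂μ) ^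
          (1 / (p : ℝ)) := by
        refine ENNReal.rpow_le_rpow (setLIntegral_mono' measurableSet_ball fun x hx ↦ ?_)
          (by positivity)
        gcongr
        exact enorm_scaledAverage_le hk_supp hkM hf hs.le hx
    _ ≤ (∫⁻ x, (M * ∫⁻ z in ball 0 1, g (x - s • z) ∂μ) ^ (p : ℝ) ∂μ) ^ (1 / (p : ℝ)) := by
        gcongr
        exact Measure.restrict_le_self
    _ = M * (∫⁻ x, (∫⁻ z in ball 0 1, g (x - s • z) ∂μ) ^ (p : ℝ) ∂μ) ^ (1 / (p : ℝ)) := by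
        simp only [ENNReal.mul_rpow_of_nonneg _ _ hp0.le]
        rw [lintegral_const_mul _ (hmeas.pow_const _),
          ENNReal.mul_rpow_of_nonneg _ _ (by positivity), one_div, ENNReal.rpow_rpow_inv hp0.ne']
    _ ≤ M * (μ (ball 0 1) ^ (1 / p : ℝ) *
          ENNReal.ofReal (s ^ (finrank ℝ E * (1 / p - 1) : ℝ)) * ∫⁻ y, g y ∂μ) := by
        gcongr
        exact lintegral_Lp_ball_comp_sub_smul_le hg hp1 hs
    _ = M * μ (ball 0 1) ^ (1 / p : ℝ) * ENNReal.ofReal (s ^ (finrank ℝ E * (1 / p - 1) : ℝ)) *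
          eLpNorm f 1 (μ.restrict (ball c (r + s))) := by
        rw [hg_lintegral, mul_assoc, mul_assoc, mul_assoc]

lemma eLpNorm_mul_scaledAverage_le (hk_supp : ∀ z ∉ ball 0 1, k z = 0) {M : ℝ≥0∞}
    (hkM : ∀ z, ‖k z‖ₑ ≤ M) (hf : Measurable f) {p : ℝ≥0} (hp : 1 ≤ p) {s : ℝ} (hs : 0 < s)
    (c : E) (r : ℝ) :
    eLpNorm (fun x ↦ s * scaledAverage μ k f s x) p (μ.restrict (ball c r)) ≤
      M * μ (ball 0 1) ^ (1 / p : ℝ) *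
        ENNReal.ofReal (s ^ (finrank ℝ E * (1 / p - 1) + 1 : ℝ)) *
        eLpNorm f 1 (μ.restrict (ball c (r + s))) := by
  calc eLpNorm (fun x ↦ s * scaledAverage μ k f s x) p (μ.restrict (ball c r))
      = ENNReal.ofReal s * eLpNorm (scaledAverage μ k f s) p (μ.restrict (ball c r)) := by
        rw [← enorm_of_nonneg hs.le]
        exact eLpNorm_const_smul s (scaledAverage μ k f s) _ _
    _ ≤ ENNReal.ofReal s * (M * μ (ball 0 1) ^ (1 / p : ℝ) *
          ENNReal.ofReal (s ^ (finrank ℝ E * (1 / p - 1) : ℝ)) *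
            eLpNorm f 1 (μ.restrict (ball c (r + s)))) := by
        gcongr
        exact eLpNorm_scaledAverage_le hk_supp hkM hf hp hs c r
    _ = M * μ (ball 0 1) ^ (1 / p : ℝ) *
          ENNReal.ofReal (s ^ (finrank ℝ E * (1 / p - 1) + 1 : ℝ)) *
            eLpNorm f 1 (μ.restrict (ball c (r + s))) := by
        rw [rpow_add hs, rpow_one, ENNReal.ofReal_mul (by positivity)]
        ring

lemma lintegral_Ioc_ofReal_rpow_sub_one {β R : ℝ} (hβ : 0 < β) (hR : 0 ≤ R) :
    ∫⁻ s in Ioc 0 R, ENNReal.ofReal (s ^ (β - 1)) = ENNReal.ofReal (R ^ β / β) := by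
  have hint : IntervalIntegrable (fun s : ℝ ↦ s ^ (β - 1)) volume 0 R :=
    intervalIntegral.intervalIntegrable_rpow' (by linarith)
  rw [← ofReal_integral_eq_lintegral_ofReal
      ((intervalIntegrable_iff_integrableOn_Ioc_of_le hR).1 hint)
      ((ae_restrict_mem measurableSet_Ioc).mono fun s hs ↦ rpow_nonneg hs.1.le _),
    ← intervalIntegral.integral_of_le hR, integral_rpow (Or.inl (by linarith)), sub_add_cancel,
    zero_rpow hβ.ne', sub_zero]

lemma eLpNorm_integral_mul_scaledAverage_le (hk : Measurable k)
    (hk_supp : ∀ z ∉ ball 0 1, k z = 0) {M : ℝ≥0∞} (hkM : ∀ z, ‖k z‖ₑ ≤ M) (hf : Measurable f)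
    {p : ℝ≥0} (hp : 1 ≤ p) (hβ : 0 < (finrank ℝ E * (1 / p - 1) + 2 : ℝ)) {R : ℝ} (hR : 0 ≤ R)
    (c : E) :
    eLpNorm (fun x ↦ ∫ s in 0..R, s * scaledAverage μ k f s x) p (μ.restrict (ball c R)) ≤
      M * μ (ball 0 1) ^ (1 / p : ℝ) *
        ENNReal.ofReal (R ^ (finrank ℝ E * (1 / p - 1) + 2 : ℝ) /
          (finrank ℝ E * (1 / p - 1) + 2)) *
        eLpNorm f 1 (μ.restrict (ball c (2 * R))) := by
  set β : ℝ := finrank ℝ E * (1 / p - 1) + 2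
  set A : ℝ≥0∞ := M * μ (ball 0 1) ^ (1 / p : ℝ)
  set I : ℝ≥0∞ := eLpNorm f 1 (μ.restrict (ball c (2 * R)))
  have hmeas : StronglyMeasurable
      (Function.uncurry fun (x : E) (s : ℝ) ↦ s * scaledAverage μ k f s x) :=
    measurable_snd.stronglyMeasurable.mul (stronglyMeasurable_uncurry_scaledAverage hk hf)
  have hscale {s : ℝ} (hs : s ∈ Ioc 0 R) :
      eLpNorm (fun x ↦ s * scaledAverage μ k f s x) p (μ.restrict (ball c R)) ≤
        A * ENNReal.ofReal (s ^ (β - 1)) * I := by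
    have hball : ball c (R + s) ⊆ ball c (2 * R) := ball_subset_ball (by linarith [hs.2])
    rw [show β - 1 = finrank ℝ E * (1 / p - 1 : ℝ) + 1 by ring]
    refine (eLpNorm_mul_scaledAverage_le hk_supp hkM hf hp hs.1 c R).trans ?_
    gcongr
    exact eLpNorm_mono_measure f (Measure.restrict_mono_set μ hball)
  simp only [intervalIntegral.integral_of_le hR]
  calc eLpNorm (fun x ↦ ∫ s in Ioc 0 R, s * scaledAverage μ k f s x) p (μ.restrict (ball c R))
      ≤ ∫⁻ s in Ioc 0 R, eLpNorm (fun x ↦ s * scaledAverage μ k f s x) p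
          (μ.restrict (ball c R)) := eLpNorm_integral_le_lintegral_eLpNorm hp hmeas
    _ ≤ ∫⁻ s in Ioc 0 R, A * ENNReal.ofReal (s ^ (β - 1)) * I :=
        setLIntegral_mono' measurableSet_Ioc fun s hs ↦ hscale hs
    _ = A * ENNReal.ofReal (R ^ β / β) * I := by
        rw [lintegral_mul_const _ (by fun_prop), lintegral_const_mul _ (by fun_prop),
          lintegral_Ioc_ofReal_rpow_sub_one hβ hR]

end ScaledAverage

section DerivScaledAverage

theorem hasDerivAt_setIntegral_of_continuous {α G : Type*} [TopologicalSpace α] [T2Space α]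
    [MeasurableSpace α] [OpensMeasurableSpace α] [NormedAddCommGroup G] [NormedSpace ℝ G]
    [SecondCountableTopologyEither α G] {μ : Measure α} [IsFiniteMeasureOnCompacts μ]
    {F F' : ℝ → α → G} (hF : Continuous (Function.uncurry F))
    (hF' : Continuous (Function.uncurry F')) (hderiv : ∀ s y, HasDerivAt (F · y) (F' s y) s)
    {K : Set α} (hK : IsCompact K) (s : ℝ) :
    HasDerivAt (fun s ↦ ∫ y in K, F s y ∂μ) (∫ y in K, F' s y ∂μ) s := by
  obtain ⟨M, hM⟩ := ((isCompact_closedBall s 1).prod hK).bddAbove_image hF'.norm.continuousOn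
  have hF'_le : ∀ᵐ y ∂μ.restrict K, ∀ u ∈ closedBall s 1, ‖F' u y‖ ≤ M :=
    (ae_restrict_mem hK.measurableSet).mono fun y hy u hu ↦
      hM (mem_image_of_mem _ (mk_mem_prod hu hy))
  have hF_int : IntegrableOn (F s) K μ :=
    ContinuousOn.integrableOn_compact' hK hK.measurableSet (by fun_prop)
  exact (hasDerivAt_integral_of_dominated_loc_of_deriv_le (closedBall_mem_nhds s one_pos)
    (Filter.Eventually.of_forall fun u ↦ Continuous.aestronglyMeasurable (by fun_prop)) hF_int
    (Continuous.aestronglyMeasurable (by fun_prop)) hF'_le (integrableOn_const hK.measure_ne_top)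
    (Filter.Eventually.of_forall fun y u _ ↦ hderiv u y)).2

variable {E : Type*} [NormedAddCommGroup E] [NormedSpace ℝ E]

lemma fderiv_comp_sub_smul {g : E → ℝ} (hg : Differentiable ℝ g) (x : E) (s : ℝ) (z v : E) :
    fderiv ℝ (fun z ↦ g (x - s • z)) z v = -(s * fderiv ℝ g (x - s • z) v) := by
  have hline : HasFDerivAt (fun z : E ↦ x - s • z) (-(s • ContinuousLinearMap.id ℝ E)) z :=
    ((hasFDerivAt_id z).const_smul s).const_sub x
  have hcomp : HasFDerivAt (fun z ↦ g (x - s • z)) _ z := (hg (x - s • z)).hasFDerivAt.comp z hline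
  simp [hcomp.fderiv]

variable [MeasurableSpace E] {μ : Measure E} {k f : E → ℝ}

lemma scaledAverage_eq_setIntegral_tsupport (k f : E → ℝ) (s : ℝ) (x : E) :
    scaledAverage μ k f s x = ∫ z in tsupport k, k z * f (x - s • z) ∂μ :=
  (setIntegral_eq_integral_of_forall_compl_eq_zero fun z hz ↦ by
    rw [image_eq_zero_of_notMem_tsupport hz, zero_mul]).symm

variable [BorelSpace E] [IsLocallyFiniteMeasure μ]

lemma continuous_scaledAverage (hk : Continuous k) (hk_supp : HasCompactSupport k)
    (hf : Continuous f) (x : E) : Continuous fun s ↦ scaledAverage μ k f s x := by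
  simp only [scaledAverage_eq_setIntegral_tsupport]
  exact continuous_parametric_integral_of_continuous
    (f := fun (s : ℝ) (z : E) ↦ k z * f (x - s • z)) (by fun_prop) hk_supp

lemma hasDerivAt_scaledAverage (hk : Continuous k) (hk_supp : HasCompactSupport k)
    (hf : ContDiff ℝ 1 f) (x : E) (s : ℝ) :
    HasDerivAt (fun s ↦ scaledAverage μ k f s x)
      (∫ z, k z * fderiv ℝ f (x - s • z) (-z) ∂μ) s := by
  have hf_cont : Continuous f := hf.continuous
  have hline (s : ℝ) (z : E) : HasDerivAt (fun s ↦ x - s • z) (-z) s := by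
    simpa using ((hasDerivAt_id s).smul_const z).const_sub x
  have htsupport : ∫ z, k z * fderiv ℝ f (x - s • z) (-z) ∂μ =
      ∫ z in tsupport k, k z * fderiv ℝ f (x - s • z) (-z) ∂μ :=
    (setIntegral_eq_integral_of_forall_compl_eq_zero fun z hz ↦ by
      rw [image_eq_zero_of_notMem_tsupport hz, zero_mul]).symm
  simp only [htsupport, scaledAverage_eq_setIntegral_tsupport]
  exact hasDerivAt_setIntegral_of_continuous
    (F := fun s z ↦ k z * f (x - s • z)) (F' := fun s z ↦ k z * fderiv ℝ f (x - s • z) (-z))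
    (by fun_prop) (by fun_prop) (fun s z ↦ ((hf.differentiable one_ne_zero
      (x - s • z)).hasFDerivAt.comp_hasDerivAt s (hline s z)).const_mul (k z)) hk_supp s

lemma scaledAverage_sum {ι : Type*} (t : Finset ι) {g : ι → E → ℝ} (hk : Continuous k)
    (hk_supp : HasCompactSupport k) (hg : ∀ i, Continuous (g i)) (s : ℝ) (x : E) :
    scaledAverage μ k (fun y ↦ ∑ i ∈ t, g i y) s x = ∑ i ∈ t, scaledAverage μ k (g i) s x := by
  simp only [scaledAverage, Finset.mul_sum]
  exact integral_finsetSum t fun i _ ↦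
    Continuous.integrable_of_hasCompactSupport (by fun_prop) hk_supp.mul_right

lemma scaledAverage_fderiv_left [FiniteDimensional ℝ E] {μ : Measure E} [μ.IsAddHaarMeasure]
    {ψ g : E → ℝ} (hψ : ContDiff ℝ 1 ψ) (hψ_supp : HasCompactSupport ψ) (hg : ContDiff ℝ 1 g)
    (x v : E) (s : ℝ) :
    scaledAverage μ (fun z ↦ fderiv ℝ ψ z v) g s x =
      s * scaledAverage μ ψ (fun y ↦ fderiv ℝ g y v) s x := by
  have hψ_cont : Continuous ψ := hψ.continuous
  have hg_cont : Continuous g := hg.continuous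
  have hψ_diff : Differentiable ℝ ψ := hψ.differentiable one_ne_zero
  have hg_diff : Differentiable ℝ g := hg.differentiable one_ne_zero
  have hcomp (z : E) : fderiv ℝ (fun z ↦ g (x - s • z)) z v = -(s * fderiv ℝ g (x - s • z) v) :=
    fderiv_comp_sub_smul hg_diff x s z v
  have hψ'_supp : HasCompactSupport fun z ↦ fderiv ℝ ψ z v := hψ_supp.fderiv_apply (𝕜 := ℝ) v
  calc ∫ z, fderiv ℝ ψ z v * g (x - s • z) ∂μ
      = ∫ z, g (x - s • z) * fderiv ℝ ψ z v ∂μ := by simp only [mul_comm]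
    _ = -∫ z, fderiv ℝ (fun z ↦ g (x - s • z)) z v * ψ z ∂μ := by
        refine integral_mul_fderiv_eq_neg_fderiv_mul_of_integrable ?_ ?_ ?_
          (fun _ _ ↦ by fun_prop) (fun _ _ ↦ by fun_prop)
        · simp only [hcomp]
          exact Continuous.integrable_of_hasCompactSupport (by fun_prop) hψ_supp.mul_left
        · exact Continuous.integrable_of_hasCompactSupport (by fun_prop) hψ'_supp.mul_left
        · exact Continuous.integrable_of_hasCompactSupport (by fun_prop) hψ_supp.mul_left
    _ = s * ∫ z, ψ z * fderiv ℝ g (x - s • z) v ∂μ := by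
        rw [← integral_neg, ← integral_const_mul]
        congr! 2
        rw [hcomp]
        ring

end DerivScaledAverage

section Laplacian

variable {N : ℕ} {v w : EuclideanSpace ℝ (Fin N) → ℝ}

lemma contDiff_fderiv_apply (hw : ContDiff ℝ 2 w) (e : EuclideanSpace ℝ (Fin N)) :
    ContDiff ℝ 1 fun y ↦ fderiv ℝ w y e :=
  (hw.fderiv_right (m := 1) (by norm_num)).clm_apply contDiff_const

lemma continuous_fderiv_fderiv_apply (hw : ContDiff ℝ 2 w) (e : EuclideanSpace ℝ (Fin N)) :
    Continuous fun x ↦ fderiv ℝ (fun y ↦ fderiv ℝ w y e) x e :=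
  ((contDiff_fderiv_apply hw e).continuous_fderiv one_ne_zero).clm_apply continuous_const

lemma continuous_lap (hw : ContDiff ℝ 2 w) : Continuous (lap w) :=
  continuous_finsetSum _ fun _ _ ↦ continuous_fderiv_fderiv_apply hw _

lemma lap_congr {x : EuclideanSpace ℝ (Fin N)} (h : v =ᶠ[𝓝 x] w) : lap v x = lap w x := by
  refine Finset.sum_congr rfl fun i _ ↦ ?_
  have hfderiv : (fun y ↦ fderiv ℝ v y (EuclideanSpace.single i 1)) =ᶠ[𝓝 x]
      fun y ↦ fderiv ℝ w y (EuclideanSpace.single i 1) :=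
    (h.fderiv (𝕜 := ℝ)).mono fun y hy ↦ by simp only [hy]
  rw [hfderiv.fderiv_eq]

lemma clm_apply_eq_sum_mul (L : EuclideanSpace ℝ (Fin N) →L[ℝ] ℝ)
    (z : EuclideanSpace ℝ (Fin N)) : L z = ∑ i, z i * L (EuclideanSpace.single i 1) := by
  conv_lhs => rw [← (EuclideanSpace.basisFun (Fin N) ℝ).sum_repr z]
  simp

variable {φ ψ : EuclideanSpace ℝ (Fin N) → ℝ}

-- Differentiating in `s` brings out `-z · ∇w`; since `-φ z = ∇ψ`, integrating by parts moves the
-- second derivative onto `w`.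
lemma hasDerivAt_scaledAverage_of_hasFDerivAt (hφ : Continuous φ) (hφ_supp : HasCompactSupport φ)
    (hψ_supp : HasCompactSupport ψ) (hψ : ∀ z, HasFDerivAt ψ (-(φ z • innerSL ℝ z)) z)
    (hw : ContDiff ℝ 2 w) (x : EuclideanSpace ℝ (Fin N)) (s : ℝ) :
    HasDerivAt (fun s ↦ scaledAverage volume φ w s x)
      (s * scaledAverage volume ψ (lap w) s x) s := by
  have hψ_diff : ContDiff ℝ 1 ψ :=
    contDiff_one_iff_hasFDerivAt.2 ⟨_, by fun_prop, hψ⟩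
  set e : Fin N → EuclideanSpace ℝ (Fin N) := fun i ↦ EuclideanSpace.single i 1
  have hψ_partial (i : Fin N) (z) : fderiv ℝ ψ z (e i) = -(φ z * z i) := by
    simp [(hψ z).fderiv, e, EuclideanSpace.inner_single_right]
  have hcont (i : Fin N) : Continuous fun y ↦ fderiv ℝ w y (e i) :=
    (contDiff_fderiv_apply hw (e i)).continuous
  have hsum : ∫ z, φ z * fderiv ℝ w (x - s • z) (-z) = s * scaledAverage volume ψ (lap w) s x :=
    calc ∫ z, φ z * fderiv ℝ w (x - s • z) (-z)
        = ∫ z, ∑ i, fderiv ℝ ψ z (e i) * fderiv ℝ w (x - s • z) (e i) := by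
          congr! 2 with z
          rw [clm_apply_eq_sum_mul, Finset.mul_sum]
          refine Finset.sum_congr rfl fun i _ ↦ ?_
          rw [hψ_partial, PiLp.neg_apply]
          ring
      _ = ∑ i, scaledAverage volume (fun z ↦ fderiv ℝ ψ z (e i))
            (fun y ↦ fderiv ℝ w y (e i)) s x := by
          refine integral_finsetSum _ fun i _ ↦ ?_
          simp only [hψ_partial]
          exact Continuous.integrable_of_hasCompactSupport (by fun_prop)
            hφ_supp.mul_right.neg.mul_right
      _ = ∑ i, s * scaledAverage volume ψ
            (fun y ↦ fderiv ℝ (fun y ↦ fderiv ℝ w y (e i)) y (e i)) s x :=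
          Finset.sum_congr rfl fun i _ ↦
            scaledAverage_fderiv_left hψ_diff hψ_supp (contDiff_fderiv_apply hw (e i)) x (e i) s
      _ = s * scaledAverage volume ψ (lap w) s x := by
          rw [← Finset.mul_sum, ← scaledAverage_sum _ hψ_diff.continuous hψ_supp fun i ↦
            continuous_fderiv_fderiv_apply hw (e i)]
          rfl
  exact hsum ▸ hasDerivAt_scaledAverage hφ hφ_supp (hw.of_le one_le_two) x s

theorem integral_mul_eq_scaledAverage_sub_integral (hφ : Continuous φ)
    (hφ_supp : HasCompactSupport φ) (hψ_supp : HasCompactSupport ψ)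
    (hψ : ∀ z, HasFDerivAt ψ (-(φ z • innerSL ℝ z)) z) (hw : ContDiff ℝ 2 w)
    (x : EuclideanSpace ℝ (Fin N)) (R : ℝ) :
    (∫ z, φ z) * w x = scaledAverage volume φ w R x -
      ∫ s in 0..R, s * scaledAverage volume ψ (lap w) s x := by
  have hψ_cont : Continuous ψ := continuous_iff_continuousAt.2 fun z ↦ (hψ z).continuousAt
  have hcont : Continuous fun s ↦ s * scaledAverage volume ψ (lap w) s x :=
    continuous_id.mul (continuous_scaledAverage hψ_cont hψ_supp (continuous_lap hw) x)
  rw [intervalIntegral.integral_eq_sub_of_hasDerivAt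
    (fun s _ ↦ hasDerivAt_scaledAverage_of_hasFDerivAt hφ hφ_supp hψ_supp hψ hw x s)
    (hcont.intervalIntegrable 0 R)]
  simp [scaledAverage, integral_mul_const]

end Laplacian

section Localization

open scoped Manifold

theorem exists_contDiff_eventuallyEq_nhdsSet {E F : Type*} [NormedAddCommGroup E]
    [NormedSpace ℝ E] [FiniteDimensional ℝ E] [NormedAddCommGroup F] [NormedSpace ℝ F] {n : ℕ∞}
    {K U : Set E} (hK : IsClosed K) (hU : IsOpen U) (hKU : K ⊆ U) {w : E → F}
    (hw : ContDiffOn ℝ n w U) : ∃ v : E → F, ContDiff ℝ n v ∧ v =ᶠ[𝓝ˢ K] w := by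
  obtain ⟨V, hV, hKV, hVU⟩ := normal_exists_closure_subset hK hU hKU
  obtain ⟨χ, hχ_one, hχ_zero, -⟩ := exists_contMDiffMap_one_nhds_of_subset_interior (n := n)
    𝓘(ℝ, E) hK (hKV.trans (interior_maximal subset_closure hV))
  have hχ : ContDiff ℝ n χ := contMDiff_iff_contDiff.1 χ.contMDiff
  refine ⟨fun x ↦ χ x • w x, contDiff_iff_contDiffAt.2 fun x ↦ ?_, ?_⟩
  · by_cases hx : x ∈ U
    · exact hχ.contDiffAt.smul (hw.contDiffAt (hU.mem_nhds hx))
    · have hzero : (fun y ↦ χ y • w y) =ᶠ[𝓝 x] fun _ ↦ 0 := by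
        filter_upwards [isClosed_closure.isOpen_compl.mem_nhds fun h ↦ hx (hVU h)] with y hy
        rw [hχ_zero y hy, zero_smul]
      exact contDiffAt_const.congr_of_eventuallyEq hzero
  · filter_upwards [hχ_one] with x hx
    rw [hx, one_smul]

end Localization

section ParaboloidBump

lemma hasDerivAt_max_zero_sq (u : ℝ) : HasDerivAt (fun v ↦ max 0 v ^ 2) (2 * max 0 u) u := by
  have hbound (v : ℝ) : ‖max 0 v ^ 2 - max 0 u ^ 2 - (v - u) • (2 * max 0 u)‖ ≤
      1 * ‖‖v - u‖ ^ 2‖ := by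
    rw [one_mul, norm_pow, norm_norm, norm_eq_abs, norm_eq_abs, sq_abs, smul_eq_mul, abs_le]
    rcases max_cases 0 v with ⟨hv, hv'⟩ | ⟨hv, hv'⟩ <;>
      rcases max_cases 0 u with ⟨hu, hu'⟩ | ⟨hu, hu'⟩ <;>
      rw [hv, hu] <;> constructor <;> nlinarith
  exact hasDerivAt_iff_isLittleO.2 <|
    (Asymptotics.IsBigO.of_bound 1 (Filter.Eventually.of_forall hbound)).trans_isLittleO
      (Asymptotics.isLittleO_pow_sub_sub u one_lt_two)

variable {E : Type*} [NormedAddCommGroup E]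

/-- The truncated paraboloid `(1 - ‖z‖²)₊`. The averages with profiles `4 (1 - ‖z‖²)₊` and
`(1 - ‖z‖²)₊²` make up the representation formula, as `∇(1 - ‖z‖²)₊² = -4 (1 - ‖z‖²)₊ z`. -/
def paraboloidBump (z : E) : ℝ := max 0 (1 - ‖z‖ ^ 2)

@[fun_prop]
lemma continuous_paraboloidBump : Continuous (paraboloidBump : E → ℝ) := by
  unfold paraboloidBump
  fun_prop

lemma paraboloidBump_nonneg (z : E) : 0 ≤ paraboloidBump z := le_max_left _ _

lemma enorm_paraboloidBump_le_one (z : E) : ‖paraboloidBump z‖ₑ ≤ 1 := by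
  rw [enorm_of_nonneg (paraboloidBump_nonneg z), ENNReal.ofReal_le_one]
  exact max_le zero_le_one (sub_le_self 1 (sq_nonneg ‖z‖))

lemma paraboloidBump_eq_zero {z : E} (hz : z ∉ ball 0 1) : paraboloidBump z = 0 := by
  rw [mem_ball_zero_iff, not_lt] at hz
  exact max_eq_left (sub_nonpos.2 (one_le_pow₀ hz))

lemma hasCompactSupport_paraboloidBump [ProperSpace E] :
    HasCompactSupport (paraboloidBump : E → ℝ) :=
  HasCompactSupport.intro (isCompact_closedBall 0 1) fun _ hz ↦
    paraboloidBump_eq_zero fun h ↦ hz (ball_subset_closedBall h)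

lemma integral_paraboloidBump_pos [ProperSpace E] [MeasurableSpace E] [BorelSpace E]
    (μ : Measure E) [μ.IsOpenPosMeasure] [IsFiniteMeasureOnCompacts μ] :
    0 < ∫ z, paraboloidBump z ∂μ :=
  continuous_paraboloidBump.integral_pos_of_hasCompactSupport_nonneg_nonzero
    hasCompactSupport_paraboloidBump paraboloidBump_nonneg (x := 0) (by simp [paraboloidBump])

lemma hasFDerivAt_paraboloidBump_sq [InnerProductSpace ℝ E] (z : E) :
    HasFDerivAt (fun z ↦ paraboloidBump z ^ 2) (-((4 * paraboloidBump z) • innerSL ℝ z)) z := by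
  have hsq : HasFDerivAt (fun z : E ↦ 1 - ‖z‖ ^ 2) (-(2 • innerSL ℝ z)) z :=
    (hasStrictFDerivAt_norm_sq z).hasFDerivAt.const_sub 1
  have hcomp := (hasDerivAt_max_zero_sq (1 - ‖z‖ ^ 2)).comp_hasFDerivAt z hsq
  convert! hcomp using 1
  ext y
  simp only [paraboloidBump, neg_apply, smul_apply, coe_innerSL_apply, smul_eq_mul, smul_neg,
    nsmul_eq_mul, Nat.cast_ofNat, neg_inj]
  ring

end ParaboloidBump

section LpEstimate

lemma eLpNorm_ball_eq_ofReal_integral_rpow {E : Type*} [PseudoMetricSpace E] [ProperSpace E]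
    [MeasurableSpace E] [OpensMeasurableSpace E] {μ : Measure E} [IsFiniteMeasureOnCompacts μ]
    {g : E → ℝ} (hg : Continuous g) {p : ℝ≥0} (hp : p ≠ 0) (c : E) (r : ℝ) :
    eLpNorm g p (μ.restrict (ball c r)) =
      ENNReal.ofReal ((∫ x in ball c r, |g x| ^ (p : ℝ) ∂μ) ^ (1 / p : ℝ)) := by
  obtain ⟨M, hM⟩ := (isCompact_closedBall c r).exists_bound_of_continuousOn hg.continuousOn
  have : IsFiniteMeasure (μ.restrict (ball c r)) :=
    isFiniteMeasure_restrict.2 measure_ball_lt_top.ne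
  have hg_memLp : MemLp g p (μ.restrict (ball c r)) :=
    MemLp.of_bound hg.aestronglyMeasurable M <|
      (ae_restrict_iff' measurableSet_ball).2 <| .of_forall fun x hx ↦
        hM x (ball_subset_closedBall hx)
  simpa only [ENNReal.coe_toReal, norm_eq_abs, one_div] using
    hg_memLp.eLpNorm_eq_integral_rpow_norm (ENNReal.coe_ne_zero.2 hp) ENNReal.coe_ne_top

lemma le_ofReal_div_mul_add_ofReal_div_mul {κ a b : ℝ} (hκ : 0 < κ) {x y z : ℝ≥0∞}
    (h : ENNReal.ofReal κ * x ≤ ENNReal.ofReal a * y + ENNReal.ofReal b * z) :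
    x ≤ ENNReal.ofReal (a / κ) * y + ENNReal.ofReal (b / κ) * z := by
  rwa [mul_comm, ← ENNReal.le_div_iff_mul_le (.inl (by positivity)) (.inl ENNReal.ofReal_ne_top),
    ENNReal.add_div, ENNReal.mul_div_right_comm, ENNReal.mul_div_right_comm,
    ← ENNReal.ofReal_div_of_pos hκ, ← ENNReal.ofReal_div_of_pos hκ] at h

variable {N : ℕ}

theorem enorm_integral_mul_eLpNorm_ball_le {φ ψ w : EuclideanSpace ℝ (Fin N) → ℝ}
    (hφ : Continuous φ) (hφ_zero : ∀ z ∉ ball 0 1, φ z = 0) (hψ_zero : ∀ z ∉ ball 0 1, ψ z = 0)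
    (hψ : ∀ z, HasFDerivAt ψ (-(φ z • innerSL ℝ z)) z) {A B : ℝ≥0∞} (hφ_le : ∀ z, ‖φ z‖ₑ ≤ A)
    (hψ_le : ∀ z, ‖ψ z‖ₑ ≤ B) (hw : ContDiff ℝ 2 w) {p : ℝ≥0} (hp : 1 ≤ p)
    (hβ : 0 < (N * (1 / p - 1) + 2 : ℝ)) {R : ℝ} (hR : 0 < R) (c : EuclideanSpace ℝ (Fin N)) :
    ‖∫ z, φ z‖ₑ * eLpNorm w p (volume.restrict (ball c R)) ≤
      A * volume (ball (0 : EuclideanSpace ℝ (Fin N)) 1) ^ (1 / p : ℝ) *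
          ENNReal.ofReal (R ^ (N * (1 / p - 1) : ℝ)) *
          eLpNorm w 1 (volume.restrict (ball c (2 * R))) +
        B * volume (ball (0 : EuclideanSpace ℝ (Fin N)) 1) ^ (1 / p : ℝ) *
          ENNReal.ofReal (R ^ (N * (1 / p - 1) + 2 : ℝ) / (N * (1 / p - 1) + 2)) *
          eLpNorm (lap w) 1 (volume.restrict (ball c (2 * R))) := by
  have hsupp {f : EuclideanSpace ℝ (Fin N) → ℝ} (hf : ∀ z ∉ ball 0 1, f z = 0) :
      HasCompactSupport f :=
    .intro (isCompact_closedBall 0 1) fun z hz ↦ hf z fun h ↦ hz (ball_subset_closedBall h)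
  have hψ_meas : Measurable ψ :=
    (continuous_iff_continuousAt.2 fun z ↦ (hψ z).continuousAt).measurable
  have hw_meas : Measurable w := hw.continuous.measurable
  have hlap_meas : Measurable (lap w) := (continuous_lap hw).measurable
  have hrepr : (∫ z, φ z) • w = scaledAverage volume φ w R -
      fun x ↦ ∫ s in 0..R, s * scaledAverage volume ψ (lap w) s x :=
    funext fun x ↦ integral_mul_eq_scaledAverage_sub_integral hφ (hsupp hφ_zero) (hsupp hψ_zero)
      hψ hw x R
  have hφ_avg : StronglyMeasurable (scaledAverage volume φ w R) :=
    (stronglyMeasurable_uncurry_scaledAverage hφ.measurable hw_meas).comp_measurable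
      (by fun_prop : Measurable fun x : EuclideanSpace ℝ (Fin N) ↦ (x, R))
  have hψ_int : StronglyMeasurable fun x ↦
      ∫ s in 0..R, s * scaledAverage volume ψ (lap w) s x := by
    have hsub := hφ_avg.sub (hw_meas.stronglyMeasurable.const_smul (∫ z, φ z))
    rwa [hrepr, sub_sub_cancel] at hsub
  rw [← eLpNorm_const_smul, hrepr]
  refine (eLpNorm_sub_le hφ_avg.aestronglyMeasurable hψ_int.aestronglyMeasurable
    (mod_cast hp)).trans (add_le_add ?_ ?_)
  · simpa only [finrank_euclideanSpace_fin, ← two_mul] using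
      eLpNorm_scaledAverage_le (μ := volume) hφ_zero hφ_le hw_meas hp hR c R
  · simpa only [finrank_euclideanSpace_fin] using
      eLpNorm_integral_mul_scaledAverage_le (μ := volume) hψ_meas hψ_zero hψ_le hlap_meas hp
        (by rwa [finrank_euclideanSpace_fin]) hR.le c

theorem exists_eLpNorm_ball_le_of_contDiff {p : ℝ≥0} (hp : 1 ≤ p)
    (hβ : 0 < (N * (1 / p - 1) + 2 : ℝ)) :
    ∃ C : ℝ, 0 < C ∧ ∀ (c : EuclideanSpace ℝ (Fin N)) (R : ℝ), 0 < R →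
      ∀ w : EuclideanSpace ℝ (Fin N) → ℝ, ContDiff ℝ 2 w →
        eLpNorm w p (volume.restrict (ball c R)) ≤
          ENNReal.ofReal (C * R ^ (N * (1 / p - 1) + 2 : ℝ)) *
              eLpNorm (lap w) 1 (volume.restrict (ball c (2 * R))) +
            ENNReal.ofReal (C * R ^ (N * (1 / p - 1) : ℝ)) *
              eLpNorm w 1 (volume.restrict (ball c (2 * R))) := by
  set γ : ℝ := N * (1 / p - 1)
  set κ : ℝ := ∫ z : EuclideanSpace ℝ (Fin N), 4 * paraboloidBump z
  set V : ℝ := volume.real (ball (0 : EuclideanSpace ℝ (Fin N)) 1)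
  have hκ : 0 < κ := by
    simpa only [κ, integral_const_mul] using
      mul_pos four_pos (integral_paraboloidBump_pos volume)
  have hV : 0 < V := ENNReal.toReal_pos (measure_ball_pos _ _ one_pos).ne' measure_ball_lt_top.ne
  have hV_eq : volume (ball (0 : EuclideanSpace ℝ (Fin N)) 1) ^ (1 / p : ℝ) =
      ENNReal.ofReal (V ^ (1 / p : ℝ)) := by
    rw [← ENNReal.ofReal_rpow_of_pos hV, ofReal_measureReal measure_ball_lt_top.ne]
  refine ⟨V ^ (1 / p : ℝ) * (4 + 1 / (γ + 2)) / κ, by positivity, fun c R hR w hw ↦ ?_⟩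
  have hle : ENNReal.ofReal κ * eLpNorm w p (volume.restrict (ball c R)) ≤
      ENNReal.ofReal (4 * V ^ (1 / p : ℝ) * R ^ γ) *
          eLpNorm w 1 (volume.restrict (ball c (2 * R))) +
        ENNReal.ofReal (1 * V ^ (1 / p : ℝ) * (R ^ (γ + 2) / (γ + 2))) *
          eLpNorm (lap w) 1 (volume.restrict (ball c (2 * R))) := by
    rw [ENNReal.ofReal_mul (by positivity), ENNReal.ofReal_mul (by positivity),
      ENNReal.ofReal_mul (by positivity), ENNReal.ofReal_mul (by positivity), ← hV_eq,
      ← enorm_of_nonneg hκ.le, ← enorm_of_nonneg four_pos.le, ← enorm_of_nonneg zero_le_one]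
    exact enorm_integral_mul_eLpNorm_ball_le (by fun_prop)
      (fun z hz ↦ by rw [paraboloidBump_eq_zero hz, mul_zero])
      (fun z hz ↦ by rw [paraboloidBump_eq_zero hz, zero_pow two_ne_zero])
      hasFDerivAt_paraboloidBump_sq
      (fun z ↦ by grw [enorm_mul, enorm_paraboloidBump_le_one, mul_one])
      (fun z ↦ by grw [enorm_pow, enorm_paraboloidBump_le_one, one_pow, enorm_one]) hw hp hβ hR c
  rw [add_comm] at hle
  refine (le_ofReal_div_mul_add_ofReal_div_mul hκ hle).trans ?_
  gcongr ENNReal.ofReal ?_ * _ + ENNReal.ofReal ?_ * _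
  · calc 1 * V ^ (1 / p : ℝ) * (R ^ (γ + 2) / (γ + 2)) / κ
        = V ^ (1 / p : ℝ) * (1 / (γ + 2)) / κ * R ^ (γ + 2) := by ring
      _ ≤ V ^ (1 / p : ℝ) * (4 + 1 / (γ + 2)) / κ * R ^ (γ + 2) := by
        gcongr
        exact le_add_of_nonneg_left four_pos.le
  · calc 4 * V ^ (1 / p : ℝ) * R ^ γ / κ
        = V ^ (1 / p : ℝ) * 4 / κ * R ^ γ := by ring
      _ ≤ V ^ (1 / p : ℝ) * (4 + 1 / (γ + 2)) / κ * R ^ γ := by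
        gcongr
        exact le_add_of_nonneg_right (by positivity)

theorem exists_integral_rpow_ball_le_of_contDiff {t : ℝ} (ht1 : 1 ≤ t)
    (hβ : 0 < N * (1 / t - 1) + 2) :
    ∃ C : ℝ, 0 < C ∧ ∀ (c : EuclideanSpace ℝ (Fin N)) (R : ℝ), 0 < R →
      ∀ w : EuclideanSpace ℝ (Fin N) → ℝ, ContDiff ℝ 2 w →
        (∫ x in ball c R, |w x| ^ t) ^ (1 / t) ≤
          C * R ^ (N * (1 / t - 1) + 2) * (∫ x in ball c (2 * R), |lap w x|) +
            C * R ^ (N * (1 / t - 1)) * ∫ x in ball c (2 * R), |w x| := by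
  lift t to ℝ≥0 using zero_le_one.trans ht1
  have ht1 : 1 ≤ t := mod_cast ht1
  obtain ⟨C, hC, hle⟩ := exists_eLpNorm_ball_le_of_contDiff ht1 hβ
  refine ⟨C, hC, fun c R hR w hw ↦ ?_⟩
  have hL1 {g : EuclideanSpace ℝ (Fin N) → ℝ} (hg : Continuous g) (r : ℝ) :
      eLpNorm g 1 (volume.restrict (ball c r)) = ENNReal.ofReal (∫ x in ball c r, |g x|) := by
    simpa using eLpNorm_ball_eq_ofReal_integral_rpow (μ := volume) hg one_ne_zero c r
  have := hle c R hR w hw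
  rw [eLpNorm_ball_eq_ofReal_integral_rpow hw.continuous (zero_lt_one.trans_le ht1).ne',
    hL1 (continuous_lap hw), hL1 hw.continuous, ← ENNReal.ofReal_mul (by positivity),
    ← ENNReal.ofReal_mul (by positivity), ← ENNReal.ofReal_add (by positivity) (by positivity),
    ENNReal.ofReal_le_ofReal_iff (by positivity)] at this
  exact this

theorem stmt17_general {t : ℝ} (ht1 : 1 ≤ t) (ht2 : t * (N - 2) < N) :
    ∃ C : ℝ, 0 < C ∧ ∀ (c : EuclideanSpace ℝ (Fin N)) (R : ℝ), 0 < R →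
      ∀ w : EuclideanSpace ℝ (Fin N) → ℝ,
        (∃ U : Set (EuclideanSpace ℝ (Fin N)), IsOpen U ∧ closedBall c (2 * R) ⊆ U ∧
          ContDiffOn ℝ 2 w U) →
        (∫ x in ball c R, |w x| ^ t) ^ (1 / t) ≤
          C * R ^ (N * (1 / t - 1) + 2) * (∫ x in ball c (2 * R), |lap w x|) +
            C * R ^ (N * (1 / t - 1)) * ∫ x in ball c (2 * R), |w x| := by
  have ht0 : 0 < t := one_pos.trans_le ht1
  have hβ : 0 < N * (1 / t - 1) + 2 := by
    field_simp
    linarith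
  obtain ⟨C, hC, hle⟩ := exists_integral_rpow_ball_le_of_contDiff ht1 hβ
  refine ⟨C, hC, fun c R hR w ⟨U, hU, hKU, hw⟩ ↦ ?_⟩
  obtain ⟨v, hv, hvw⟩ := exists_contDiff_eventuallyEq_nhdsSet (n := 2) isClosed_closedBall hU hKU hw
  have hvw_nhds {r : ℝ} (hr : r ≤ 2 * R) {x} (hx : x ∈ ball c r) : v =ᶠ[𝓝 x] w :=
    hvw.filter_mono <| nhds_le_nhdsSet <| closedBall_subset_closedBall hr <|
      ball_subset_closedBall hx
  have hpow : ∫ x in ball c R, |w x| ^ t = ∫ x in ball c R, |v x| ^ t := by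
    refine setIntegral_congr_fun measurableSet_ball fun x hx ↦ ?_
    simp only [(hvw_nhds (by linarith) hx).eq_of_nhds]
  have hlap : ∫ x in ball c (2 * R), |lap w x| = ∫ x in ball c (2 * R), |lap v x| := by
    refine setIntegral_congr_fun measurableSet_ball fun x hx ↦ ?_
    simp only [lap_congr (hvw_nhds le_rfl hx)]
  have habs : ∫ x in ball c (2 * R), |w x| = ∫ x in ball c (2 * R), |v x| := by
    refine setIntegral_congr_fun measurableSet_ball fun x hx ↦ ?_
    simp only [(hvw_nhds le_rfl hx).eq_of_nhds]
  simpa only [hpow, hlap, habs] using hle c R hR v hv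

end LpEstimate

/-- elliptic `L^t` estimate on balls. -/
theorem stmt17 {N : ℕ} (hN : 3 ≤ N) (t : ℝ) (ht1 : 1 ≤ t) (ht2 : t < N / ((N : ℝ) - 2)) :
    ∃ C : ℝ, 0 < C ∧ ∀ R : ℝ, 0 < R → ∀ w : EuclideanSpace ℝ (Fin N) → ℝ,
      (∃ U : Set (EuclideanSpace ℝ (Fin N)), IsOpen U ∧
        closedBall (0 : EuclideanSpace ℝ (Fin N)) (2 * R) ⊆ U ∧ ContDiffOn ℝ 2 w U) →
      (∫ x in ball (0 : EuclideanSpace ℝ (Fin N)) R, |w x| ^ t) ^ (1 / t)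
        ≤ C * R ^ ((N : ℝ) * (1 / t - 1) + 2) *
            (∫ x in ball (0 : EuclideanSpace ℝ (Fin N)) (2 * R), |lap w x|)
          + C * R ^ ((N : ℝ) * (1 / t - 1)) *
            ∫ x in ball (0 : EuclideanSpace ℝ (Fin N)) (2 * R), |w x| := by
  have hN2 : (0 : ℝ) < N - 2 := sub_pos.2 (mod_cast hN)
  obtain ⟨C, hC, hle⟩ := stmt17_general ht1 ((lt_div_iff₀ hN2).1 ht2)
  exact ⟨C, hC, hle 0⟩
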